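/- arXiv:1905.07545 — 2 statements merged into one kernel-verified Lean document; each statement's English description precedes it below -/
import Mathlib

section
/- Assume ∫_0^T |a(t)| dt < ∞, and let h : ℝ^d → ℝ be twice continuously differentiable with h and all its partial derivatives up to order 2 bounded on ℝ^d. Then for all 0 ≤ r ≤ t ≤ T and all x ∈ ℝ^d, ∫_{ℝ^d} h(x+y) dν_{r,t}(y) = h(x) + ∫_r^t Σ_{i,j} a^{ij}(s) ( ∫_{ℝ^d} ∂_{x^i}∂_{x^j} h(x+y) dν_{s,t}(y) ) ds. -/
open MeasureTheory Set ENNReal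

noncomputable section

/-- The partial derivative `∂_{x^i} φ` of a function on `ℝ^d`. -/
def pd {d : ℕ} (i : Fin d) (φ : (Fin d → ℝ) → ℝ) : (Fin d → ℝ) → ℝ :=
  fun x => fderiv ℝ φ x (Pi.single i 1)

/-- `|a(t)| = max_{i,j} |a^{ij}(t)|`. -/
def aMax {d : ℕ} (a : ℝ → Fin d → Fin d → ℝ) (t : ℝ) : ℝ :=
  ⨆ i, ⨆ j, |a t i j|

/-- `ν s t` is the centered (possibly degenerate) Gaussian probability measure on `ℝ^d`
with covariance matrix `∫_s^t 2A(r) dr`, characterized by its characteristic function. -/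
def IsGaussianFamily {d : ℕ} (T : ℝ) (a : ℝ → Fin d → Fin d → ℝ)
    (ν : ℝ → ℝ → Measure (Fin d → ℝ)) : Prop :=
  ∀ s t : ℝ, 0 ≤ s → s ≤ t → t ≤ T →
    IsProbabilityMeasure (ν s t) ∧
    ∀ ξ : Fin d → ℝ,
      (∫ y, Complex.exp (Complex.I * ((∑ k, ξ k * y k : ℝ) : ℂ)) ∂(ν s t)) =
        Complex.exp (-(((∑ i, ∑ j, (∫ r in Ioc s t, 2 * a r i j) * ξ i * ξ j : ℝ) : ℂ)) / 2)

/-!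
Write `Q_s(ξ) = ∑ a^{ij}(s) ξ^i ξ^j`. The characteristic function of `ν_{s,t}` at `ξ` is
`exp (-∫_s^t Q_u(ξ) du)`, an absolutely continuous function of `s` with derivative `Q_s(ξ)` times
itself, and multiplication of the Fourier transform by `-Q_s` is the operator `∑ a^{ij}(s) ∂_i ∂_j`.
Integrating over `[r, t]` and against the Fourier transform of a Schwartz function gives the
identity for that function. Both sides are stable under bounded pointwise convergence of derivatives
of order at most two, so mollification extends the identity to compactly supported `C^2` functions,
and multiplication by dilated bump functions extends it to `C^2` functions bounded together
with their derivatives.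
-/

open Filter Topology
open ContinuousLinearMap (lsmul lsmul_apply)
open scoped NNReal RealInnerProductSpace ContDiff FourierTransform LineDeriv SchwartzMap Convolution

theorem absolutelyContinuousOnInterval_lipschitzOnWith_comp {X Y : Type*}
    [PseudoMetricSpace X] [PseudoMetricSpace Y] {g : X → Y} {f : ℝ → X} {K : ℝ≥0} {a b : ℝ}
    {s : Set X} (hg : LipschitzOnWith K g s) (hf : AbsolutelyContinuousOnInterval f a b)
    (hs : MapsTo f (uIcc a b) s) :
    AbsolutelyContinuousOnInterval (g ∘ f) a b := by
  have hlim : Tendsto (fun E : ℕ × (ℕ → ℝ × ℝ) ↦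
      K * ∑ i ∈ Finset.range E.1, dist (f (E.2 i).1) (f (E.2 i).2))
      (AbsolutelyContinuousOnInterval.totalLengthFilter ⊓
        𝓟 (AbsolutelyContinuousOnInterval.disjWithin a b)) (𝓝 0) := by
    simpa only [mul_zero] using Tendsto.const_mul (K : ℝ) hf
  refine squeeze_zero' (.of_forall fun E ↦ Finset.sum_nonneg fun i _ ↦ dist_nonneg) ?_ hlim
  filter_upwards [mem_inf_of_right (mem_principal_self _)] with E hE
  rw [Finset.mul_sum]
  exact Finset.sum_le_sum fun i hi ↦
    hg.dist_le_mul _ (hs (hE.1 i hi).1) _ (hs (hE.1 i hi).2)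

theorem exp_neg_integral_eq_one_sub {q : ℝ → ℝ} {a b : ℝ} (hq : IntervalIntegrable q volume a b) :
    Real.exp (-∫ u in a..b, q u) = 1 - ∫ s in a..b, q s * Real.exp (-∫ u in s..b, q u) := by
  let Q : ℝ → ℝ := fun s ↦ ∫ u in b..s, q u
  have hQ (s : ℝ) : -∫ u in s..b, q u = Q s := by
    rw [intervalIntegral.integral_symm, neg_neg]
  have hQ_ac : AbsolutelyContinuousOnInterval Q a b :=
    hq.absolutelyContinuousOnInterval_intervalIntegral right_mem_uIcc
  have hexp_ac : AbsolutelyContinuousOnInterval (Real.exp ∘ Q) a b := by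
    obtain ⟨M, hM⟩ := hQ_ac.exists_bound
    obtain ⟨K, hK⟩ := (Real.contDiff_exp (n := 1)).contDiffOn.exists_lipschitzOnWith
      one_ne_zero (convex_Icc (-M) M) isCompact_Icc
    exact absolutelyContinuousOnInterval_lipschitzOnWith_comp hK hQ_ac fun s hs ↦ abs_le.1 (hM s hs)
  have hderiv : ∫ s in a..b, deriv (Real.exp ∘ Q) s = ∫ s in a..b, q s * Real.exp (Q s) := by
    refine intervalIntegral.integral_congr_ae ?_
    filter_upwards [hq.ae_hasDerivAt_integral] with s hs hsab
    rw [mul_comm]; exact (hs (uIoc_subset_uIcc hsab) b right_mem_uIcc).exp.deriv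
  have hQb : Q b = 0 := intervalIntegral.integral_same
  simp only [hQ]
  rw [← hderiv, hexp_ac.integral_deriv_eq_sub, Function.comp_apply, Function.comp_apply, hQb,
    Real.exp_zero, _root_.sub_sub_cancel]

section BackwardGaussian

variable {ι V : Type*} [Fintype ι] [NormedAddCommGroup V] [InnerProductSpace ℝ V]

/-- The quadratic form `ξ ↦ ∑ k, c k ⟪v k, ξ⟫ ⟪w k, ξ⟫`: up to sign, the Fourier symbol of the
second-order operator `∑ k, c k ∂_{v k} ∂_{w k}`. -/
def quadSymbol (c : ι → ℝ) (v w : ι → V) (ξ : V) : ℝ :=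
  ∑ k, c k * (⟪v k, ξ⟫ * ⟪w k, ξ⟫)

/-- The transition laws `μ s`, for `s ∈ [r, t]`, of the process with time-dependent generator
`∑ k, c s k ∂_{v k} ∂_{w k}` run from time `s` to the fixed time `t`, encoded by their Gaussian
characteristic functions. -/
structure IsBackwardGaussian [MeasurableSpace V] (c : ℝ → ι → ℝ) (v w : ι → V) (r t : ℝ)
    (μ : ℝ → Measure V) : Prop where
  le : r ≤ t
  integrableOn_coeff (k : ι) : IntegrableOn (fun s ↦ c s k) (Ioc r t)
  isProbabilityMeasure {s : ℝ} (hs : s ∈ Icc r t) : IsProbabilityMeasure (μ s)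
  charFun_eq {s : ℝ} (hs : s ∈ Icc r t) (ξ : V) :
    charFun (μ s) ξ = Real.exp (-∫ u in s..t, quadSymbol (c u) v w ξ)

namespace IsBackwardGaussian

variable [MeasurableSpace V] {c : ℝ → ι → ℝ} {v w : ι → V} {r t : ℝ} {μ : ℝ → Measure V}

theorem intervalIntegrable_coeff (hμ : IsBackwardGaussian c v w r t μ) (k : ι) :
    IntervalIntegrable (fun u ↦ c u k) volume r t :=
  (intervalIntegrable_iff_integrableOn_Ioc_of_le hμ.le).2 (hμ.integrableOn_coeff k)

theorem intervalIntegrable_quadSymbol (hμ : IsBackwardGaussian c v w r t μ) (ξ : V) :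
    IntervalIntegrable (fun u ↦ quadSymbol (c u) v w ξ) volume r t := by
  simpa only [quadSymbol, Finset.sum_fn] using IntervalIntegrable.sum Finset.univ
    fun k _ ↦ (hμ.intervalIntegrable_coeff k).mul_const (⟪v k, ξ⟫ * ⟪w k, ξ⟫)

theorem integral_quadSymbol (hμ : IsBackwardGaussian c v w r t μ) {s : ℝ} (hs : s ∈ Icc r t)
    (ξ : V) : ∫ u in s..t, quadSymbol (c u) v w ξ =
      quadSymbol (fun k ↦ ∫ u in s..t, c u k) v w ξ := by
  have hsub : uIcc s t ⊆ uIcc r t := by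
    simpa only [uIcc_of_le hs.2, uIcc_of_le hμ.le] using Icc_subset_Icc_left hs.1
  simp only [quadSymbol, ← intervalIntegral.integral_mul_const]
  exact intervalIntegral.integral_finsetSum fun k _ ↦
    ((hμ.intervalIntegrable_coeff k).mono_set hsub).mul_const _

theorem continuousOn_charFun (hμ : IsBackwardGaussian c v w r t μ) :
    ContinuousOn (fun p : ℝ × V ↦ charFun (μ p.1) p.2) (Icc r t ×ˢ univ) := by
  have hcoeff (k : ι) : ContinuousOn (fun s ↦ ∫ u in s..t, c u k) (Icc r t) := by
    simp only [intervalIntegral.integral_symm t]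
    rw [← uIcc_of_le hμ.le]
    exact (intervalIntegral.continuousOn_primitive_interval'
      (hμ.intervalIntegrable_coeff k) right_mem_uIcc).neg
  have hexp : ContinuousOn (fun p : ℝ × V ↦ ((Real.exp
      (-quadSymbol (fun k ↦ ∫ u in p.1..t, c u k) v w p.2) : ℝ) : ℂ)) (Icc r t ×ˢ univ) := by
    refine Complex.continuous_ofReal.comp_continuousOn
      (Real.continuous_exp.comp_continuousOn (ContinuousOn.neg ?_))
    refine continuousOn_finsetSum _ fun k _ ↦ ContinuousOn.mul ?_ (by fun_prop)
    exact (hcoeff k).comp continuousOn_fst fun p hp ↦ hp.1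
  refine hexp.congr fun p hp ↦ ?_
  rw [hμ.charFun_eq hp.1, hμ.integral_quadSymbol hp.1]

theorem charFun_left (hμ : IsBackwardGaussian c v w r t μ) (ξ : V) :
    charFun (μ r) ξ = 1 - ∫ s in Ioc r t, quadSymbol (c s) v w ξ * charFun (μ s) ξ := by
  rw [hμ.charFun_eq (left_mem_Icc.2 hμ.le),
    exp_neg_integral_eq_one_sub (hμ.intervalIntegrable_quadSymbol ξ),
    intervalIntegral.integral_of_le hμ.le, Complex.ofReal_sub, Complex.ofReal_one,
    ← integral_complex_ofReal]
  congr 1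
  refine setIntegral_congr_fun measurableSet_Ioc fun s hs ↦ ?_
  simp only [hμ.charFun_eq (Ioc_subset_Icc_self hs), Complex.ofReal_mul]

theorem continuousOn_integral [FiniteDimensional ℝ V] [BorelSpace V]
    (hμ : IsBackwardGaussian c v w r t μ) {g : V → ℂ} (hg : Continuous g)
    {C : ℝ} (hC : ∀ x, ‖g x‖ ≤ C) : ContinuousOn (fun s ↦ ∫ y, g y ∂(μ s)) (Icc r t) := by
  let P (s : Icc r t) : ProbabilityMeasure V := ⟨μ s, hμ.isProbabilityMeasure s.2⟩
  have hP : Continuous P := by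
    refine continuous_iff_seqContinuous.2 fun u s hu ↦
      ProbabilityMeasure.tendsto_of_tendsto_charFun fun ξ ↦ ?_
    have hξ : ContinuousOn (fun s ↦ charFun (μ s) ξ) (Icc r t) :=
      hμ.continuousOn_charFun.comp (f := fun s ↦ (s, ξ)) (by fun_prop) fun s hs ↦ ⟨hs, mem_univ ξ⟩
    exact (hξ.domRestrict.tendsto s).comp hu
  rw [continuousOn_iff_continuous_domRestrict, continuous_iff_continuousAt]
  exact fun s ↦ (ProbabilityMeasure.tendsto_iff_forall_integral_rclike_tendsto ℂ).1
    (hP.tendsto s) (BoundedContinuousFunction.ofNormedAddCommGroup g hg C hC)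

end IsBackwardGaussian

end BackwardGaussian

section Schwartz

variable {V : Type*} [NormedAddCommGroup V] [InnerProductSpace ℝ V] [FiniteDimensional ℝ V]
  [MeasurableSpace V] [BorelSpace V]

theorem integral_schwartzMap_eq_integral_fourier_mul_charFun (μ : Measure V) [IsFiniteMeasure μ]
    (f : 𝓢(V, ℂ)) : ∫ y, f y ∂μ = ∫ ξ, 𝓕 f ξ * charFun μ ((2 * Real.pi) • ξ) := by
  have hinv (y : V) : VectorFourier.fourierIntegral Real.fourierChar volume (-innerₗ V)
      (𝓕 f : 𝓢(V, ℂ)) y = f y := by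
    have hf : 𝓕⁻ (𝓕 f) = f := FourierTransform.fourierInv_fourier_eq f
    rw [← DFunLike.congr_fun hf y, SchwartzMap.fourierInv_coe, Real.fourierInv_eq]
    simp only [VectorFourier.fourierIntegral, LinearMap.neg_apply, innerₗ_apply_apply, neg_neg]
  have hchar (ξ : V) : VectorFourier.fourierIntegral Real.fourierChar μ (-innerₗ V).flip 1 ξ =
      charFun μ ((2 * Real.pi) • ξ) := by
    refine integral_congr_ae (.of_forall fun y ↦ ?_)
    simp [Circle.smul_def, Real.fourierChar_apply, inner_smul_right, real_inner_comm]
  have hswap := VectorFourier.integral_fourierIntegral_smul_eq_flip (μ := volume) (ν := μ) (g := 1)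
    (L := -innerₗ V) Real.continuous_fourierChar continuous_inner.neg (𝓕 f).integrable
    (integrable_const (1 : ℂ))
  simpa only [hinv, hchar, Pi.one_apply, smul_eq_mul, mul_one] using hswap

theorem fourier_lineDeriv_lineDeriv (f : 𝓢(V, ℂ)) (v w ξ : V) :
    𝓕 (∂_{v} (∂_{w} f)) ξ =
      -((⟪v, (2 * Real.pi) • ξ⟫ * ⟪w, (2 * Real.pi) • ξ⟫ : ℝ) : ℂ) * 𝓕 f ξ := by
  have hinner (u : V) : Function.HasTemperateGrowth fun y : V ↦ ⟪y, u⟫ :=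
    ((innerSL ℝ).flip u).hasTemperateGrowth
  simp only [SchwartzMap.fourier_lineDerivOp_eq, smul_apply,
    SchwartzMap.smulLeftCLM_apply_apply (hinner _), inner_smul_right, real_inner_comm _ ξ,
    smul_eq_mul, Complex.real_smul]
  push_cast
  linear_combination
    4 * (Real.pi : ℂ) ^ 2 * ⟪v, ξ⟫ * ⟪w, ξ⟫ * 𝓕 f ξ * Complex.I_sq

variable {ι : Type*} [Fintype ι] {c : ℝ → ι → ℝ} {v w : ι → V} {r t : ℝ} {μ : ℝ → Measure V}

theorem sum_mul_fourier_lineDeriv_lineDeriv (f : 𝓢(V, ℂ)) (c : ι → ℝ) (v w : ι → V) (ξ : V) :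
    ∑ k, c k * 𝓕 (∂_{v k} (∂_{w k} f)) ξ =
      -(quadSymbol c v w ((2 * Real.pi) • ξ) * 𝓕 f ξ) := by
  simp only [fourier_lineDeriv_lineDeriv, quadSymbol, Complex.ofReal_sum, Finset.sum_mul,
    ← Finset.sum_neg_distrib]
  refine Finset.sum_congr rfl fun k _ ↦ ?_
  push_cast
  ring

namespace IsBackwardGaussian

theorem integrable_coeff_mul_charFun (hμ : IsBackwardGaussian c v w r t μ) {g : V → ℂ}
    (hg : Integrable g) (k : ι) :
    Integrable (fun p : ℝ × V ↦ c p.1 k * (g p.2 * charFun (μ p.1) ((2 * Real.pi) • p.2)))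
      ((volume.restrict (Ioc r t)).prod volume) := by
  have hchar : AEStronglyMeasurable
      (fun p : ℝ × V ↦ charFun (μ p.1) ((2 * Real.pi) • p.2))
      ((volume.restrict (Ioc r t)).prod volume) := by
    have hcont : ContinuousOn (fun p : ℝ × V ↦ charFun (μ p.1) ((2 * Real.pi) • p.2))
        (Ioc r t ×ˢ univ) :=
      hμ.continuousOn_charFun.comp (f := fun p : ℝ × V ↦ (p.1, (2 * Real.pi) • p.2))
        (by fun_prop) fun p hp ↦ ⟨Ioc_subset_Icc_self hp.1, mem_univ _⟩
    rw [← Measure.restrict_univ (μ := (volume : Measure V)), Measure.prod_restrict]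
    exact hcont.aestronglyMeasurable (measurableSet_Ioc.prod .univ)
  have hbound : ∀ᵐ p : ℝ × V ∂(volume.restrict (Ioc r t)).prod volume,
      ‖charFun (μ p.1) ((2 * Real.pi) • p.2)‖ ≤ 1 := by
    filter_upwards [Measure.quasiMeasurePreserving_fst.ae (ae_restrict_mem measurableSet_Ioc)]
      with p hp
    have := hμ.isProbabilityMeasure (Ioc_subset_Icc_self hp)
    exact norm_charFun_le_one _
  refine (((hμ.integrableOn_coeff k).ofReal.mul_prod hg).bdd_mul hchar hbound).congr
    (.of_forall fun p ↦ ?_)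
  simp only [RCLike.ofReal_eq_complex_ofReal]
  ring

theorem integrable_quadSymbol_mul_charFun (hμ : IsBackwardGaussian c v w r t μ) (f : 𝓢(V, ℂ)) :
    Integrable (fun p : ℝ × V ↦ quadSymbol (c p.1) v w ((2 * Real.pi) • p.2) * 𝓕 f p.2 *
      charFun (μ p.1) ((2 * Real.pi) • p.2)) ((volume.restrict (Ioc r t)).prod volume) := by
  refine (integrable_finsetSum Finset.univ fun k _ ↦ hμ.integrable_coeff_mul_charFun
    (𝓕 (∂_{v k} (∂_{w k} f))).integrable k).neg.congr (.of_forall fun p ↦ ?_)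
  simp only [Pi.neg_apply, ← mul_assoc, ← Finset.sum_mul, sum_mul_fourier_lineDeriv_lineDeriv,
    neg_mul, neg_neg]

theorem sum_mul_integral_lineDeriv_lineDeriv (hμ : IsBackwardGaussian c v w r t μ) (f : 𝓢(V, ℂ))
    {s : ℝ} (hs : s ∈ Icc r t) :
    ∑ k, c s k • ∫ y, (∂_{v k} (∂_{w k} f)) y ∂(μ s) =
      -∫ ξ, quadSymbol (c s) v w ((2 * Real.pi) • ξ) * 𝓕 f ξ *
        charFun (μ s) ((2 * Real.pi) • ξ) := by
  have := hμ.isProbabilityMeasure hs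
  have hint (k : ι) : Integrable fun ξ ↦
      c s k * (𝓕 (∂_{v k} (∂_{w k} f)) ξ * charFun (μ s) ((2 * Real.pi) • ξ)) :=
    ((𝓕 (∂_{v k} (∂_{w k} f))).integrable.mul_bdd (c := 1)
      (by fun_prop) (.of_forall fun ξ ↦ norm_charFun_le_one _)).const_mul _
  simp only [integral_schwartzMap_eq_integral_fourier_mul_charFun (μ s), Complex.real_smul,
    ← integral_const_mul]
  rw [← integral_finsetSum _ fun k _ ↦ hint k, ← integral_neg]
  simp only [← mul_assoc, ← Finset.sum_mul, sum_mul_fourier_lineDeriv_lineDeriv, neg_mul]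

theorem integral_schwartzMap (hμ : IsBackwardGaussian c v w r t μ) (f : 𝓢(V, ℂ)) :
    ∫ y, f y ∂(μ r) = f 0 +
      ∫ s in Ioc r t, ∑ k, c s k • ∫ y, (∂_{v k} (∂_{w k} f)) y ∂(μ s) := by
  have := hμ.isProbabilityMeasure (left_mem_Icc.2 hμ.le)
  have hf0 : f 0 = ∫ ξ, 𝓕 f ξ := by
    simpa only [integral_dirac, charFun_dirac, inner_zero_left, Complex.ofReal_zero, zero_mul,
      Complex.exp_zero, mul_one] using
      integral_schwartzMap_eq_integral_fourier_mul_charFun (Measure.dirac 0) f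
  have hprod := hμ.integrable_quadSymbol_mul_charFun f
  calc
    ∫ y, f y ∂(μ r) = ∫ ξ, 𝓕 f ξ * charFun (μ r) ((2 * Real.pi) • ξ) :=
      integral_schwartzMap_eq_integral_fourier_mul_charFun (μ r) f
    _ = ∫ ξ, (𝓕 f ξ - ∫ s in Ioc r t, quadSymbol (c s) v w ((2 * Real.pi) • ξ) * 𝓕 f ξ *
          charFun (μ s) ((2 * Real.pi) • ξ)) := by
      simp only [hμ.charFun_left, mul_sub, mul_one, ← integral_const_mul, mul_left_comm, mul_assoc]
    _ = f 0 - ∫ s in Ioc r t, ∫ ξ, quadSymbol (c s) v w ((2 * Real.pi) • ξ) * 𝓕 f ξ *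
          charFun (μ s) ((2 * Real.pi) • ξ) := by
      rw [integral_sub (𝓕 f).integrable hprod.integral_prod_right, ← hf0]
      exact congrArg _ (integral_integral_swap hprod).symm
    _ = _ := by
      rw [sub_eq_add_neg, ← integral_neg, setIntegral_congr_fun measurableSet_Ioc fun s hs ↦
        hμ.sum_mul_integral_lineDeriv_lineDeriv f (Ioc_subset_Icc_self hs)]

end IsBackwardGaussian

end Schwartz

section Approximation

variable {E F : Type*} [NormedAddCommGroup E] [NormedSpace ℝ E] [NormedAddCommGroup F]
  [NormedSpace ℝ F] {m k : ℕ} {H : ℕ → E → F} {f : E → F}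

/-- Bounded pointwise convergence of a sequence of `C^m` functions, together with all derivatives
of order at most `m`. -/
structure TendstoBoundedly (m : ℕ) (H : ℕ → E → F) (f : E → F) : Prop where
  contDiff (n : ℕ) : ContDiff ℝ m (H n)
  exists_bound {k : ℕ} (hk : k ≤ m) : ∃ C, ∀ n x, ‖iteratedFDeriv ℝ k (H n) x‖ ≤ C
  tendsto {k : ℕ} (hk : k ≤ m) (x : E) :
    Tendsto (fun n ↦ iteratedFDeriv ℝ k (H n) x) atTop (𝓝 (iteratedFDeriv ℝ k f x))

namespace TendstoBoundedly

theorem continuous_iteratedFDeriv_apply (hH : TendstoBoundedly m H f) (hk : k ≤ m) (n : ℕ)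
    (u : Fin k → E) : Continuous fun x ↦ iteratedFDeriv ℝ k (H n) x u :=
  (ContinuousMultilinearMap.apply ℝ (fun _ ↦ E) F u).continuous.comp
    ((hH.contDiff n).continuous_iteratedFDeriv (by exact_mod_cast hk))

theorem exists_bound_apply (hH : TendstoBoundedly m H f) (hk : k ≤ m) (u : Fin k → E) :
    ∃ C, ∀ n x, ‖iteratedFDeriv ℝ k (H n) x u‖ ≤ C := by
  obtain ⟨C, hC⟩ := hH.exists_bound hk
  exact ⟨C * ∏ i, ‖u i‖, fun n x ↦ ContinuousMultilinearMap.le_of_opNorm_le (hC n x) u⟩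

theorem tendsto_apply (hH : TendstoBoundedly m H f) (hk : k ≤ m) (u : Fin k → E) (x : E) :
    Tendsto (fun n ↦ iteratedFDeriv ℝ k (H n) x u) atTop (𝓝 (iteratedFDeriv ℝ k f x u)) :=
  ((ContinuousMultilinearMap.apply ℝ (fun _ ↦ E) F u).continuous.tendsto _).comp (hH.tendsto hk x)

theorem tendsto_integral [MeasurableSpace E] [BorelSpace E] [SecondCountableTopology E]
    (hH : TendstoBoundedly m H f) (hk : k ≤ m) (u : Fin k → E) (μ : Measure E)
    [IsFiniteMeasure μ] :
    Tendsto (fun n ↦ ∫ x, iteratedFDeriv ℝ k (H n) x u ∂μ) atTop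
      (𝓝 (∫ x, iteratedFDeriv ℝ k f x u ∂μ)) := by
  obtain ⟨C, hC⟩ := hH.exists_bound_apply hk u
  exact tendsto_integral_of_dominated_convergence (fun _ ↦ C)
    (fun n ↦ (hH.continuous_iteratedFDeriv_apply hk n u).aestronglyMeasurable)
    (integrable_const C) (fun n ↦ .of_forall (hC n)) (.of_forall (hH.tendsto_apply hk u))

end TendstoBoundedly

theorem iteratedFDeriv_convolution_right [MeasurableSpace E] [BorelSpace E]
    [SecondCountableTopology E] {μ : Measure E} [μ.IsAddLeftInvariant] [SFinite μ]
    {φ : E → ℝ} (hφ : LocallyIntegrable φ μ) (hf : ContDiff ℝ m f)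
    (hs : HasCompactSupport f) (hk : k ≤ m) :
    iteratedFDeriv ℝ k (φ ⋆[lsmul ℝ ℝ, μ] f) = φ ⋆[lsmul ℝ ℝ, μ] iteratedFDeriv ℝ k f := by
  induction k with
  | zero =>
    ext1 x
    simp only [iteratedFDeriv_zero_eq_comp, Function.comp_apply, convolution_def, lsmul_apply,
      ← map_smul]
    exact ((continuousMultilinearCurryFin0 ℝ E F).symm.toContinuousLinearEquiv.integral_comp_comm
      _).symm
  | succ k ih =>
    have hk1 : ContDiff ℝ 1 (iteratedFDeriv ℝ k f) :=
      hf.iteratedFDeriv_right (by rw [add_comm]; exact_mod_cast hk)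
    ext1 x
    have hfderiv : fderiv ℝ (φ ⋆[lsmul ℝ ℝ, μ] iteratedFDeriv ℝ k f) x =
        ∫ y, φ y • fderiv ℝ (iteratedFDeriv ℝ k f) (x - y) ∂μ :=
      ((hs.iteratedFDeriv k).hasFDerivAt_convolution_right (lsmul ℝ ℝ) hφ hk1 x).fderiv
    simp only [iteratedFDeriv_succ_eq_comp_left, ih (by lia), Function.comp_apply, hfderiv,
      convolution_def, lsmul_apply, ← map_smul]
    exact (ContinuousLinearEquiv.integral_comp_comm (𝕜 := ℝ) (μ := μ) (F := E [×(k + 1)]→L[ℝ] F)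
      (continuousMultilinearCurryLeftEquiv ℝ (fun _ : Fin (k + 1) ↦ E)
        F).symm.toContinuousLinearEquiv
      fun y ↦ φ y • fderiv ℝ (iteratedFDeriv ℝ k f) (x - y)).symm

theorem exists_bound_iteratedFDeriv_smul {α : Type*} {K : α → E → ℝ}
    (hK : ∀ a, ContDiff ℝ m (K a)) (hf : ContDiff ℝ m f)
    (hKb : ∀ k ≤ m, ∃ C, ∀ a x, ‖iteratedFDeriv ℝ k (K a) x‖ ≤ C)
    (hfb : ∀ k ≤ m, ∃ C, ∀ x, ‖iteratedFDeriv ℝ k f x‖ ≤ C) (hk : k ≤ m) :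
    ∃ C, ∀ a x, ‖iteratedFDeriv ℝ k (fun y ↦ K a y • f y) x‖ ≤ C := by
  choose! A hA using hKb
  choose! B hB using hfb
  refine ⟨∑ i ∈ Finset.range (k + 1), k.choose i * A i * B (k - i), fun a x ↦ ?_⟩
  refine (norm_iteratedFDeriv_smul_le (hK a) hf x (by exact_mod_cast hk)).trans
    (Finset.sum_le_sum fun i hi ↦ ?_)
  have hik : i ≤ k := Finset.mem_range_succ_iff.1 hi
  have hAi := hA i (hik.trans hk) a x
  have := (norm_nonneg _).trans hAi
  gcongr
  exact hB (k - i) (by lia) x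

variable [FiniteDimensional ℝ E]

theorem tendstoBoundedly_normed_convolution [MeasurableSpace E] [BorelSpace E] [CompleteSpace F]
    {μ : Measure E} [μ.IsAddHaarMeasure] {φ : ℕ → ContDiffBump (0 : E)}
    (hφ : Tendsto (fun n ↦ (φ n).rOut) atTop (𝓝 0)) (hf : ContDiff ℝ m f)
    (hs : HasCompactSupport f) :
    TendstoBoundedly m (fun n ↦ (φ n).normed μ ⋆[lsmul ℝ ℝ, μ] f) f := by
  have hcont {k : ℕ} (hk : k ≤ m) : Continuous (iteratedFDeriv ℝ k f) :=
    hf.continuous_iteratedFDeriv (by exact_mod_cast hk)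
  have hderiv {k : ℕ} (hk : k ≤ m) (n : ℕ) :
      iteratedFDeriv ℝ k ((φ n).normed μ ⋆[lsmul ℝ ℝ, μ] f) =
        (φ n).normed μ ⋆[lsmul ℝ ℝ, μ] iteratedFDeriv ℝ k f :=
    iteratedFDeriv_convolution_right (φ n).continuous_normed.locallyIntegrable hf hs hk
  refine ⟨fun n ↦ ?_, fun {k} hk ↦ ?_, fun {k} hk x ↦ ?_⟩
  · exact (φ n).hasCompactSupport_normed.contDiff_convolution_left _ (φ n).contDiff_normed
      hf.continuous.locallyIntegrable
  · obtain ⟨C, hC⟩ := (hs.iteratedFDeriv k).exists_bound_of_continuous (hcont hk)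
    refine ⟨C, fun n x ↦ ?_⟩
    rw [hderiv hk, ← dist_zero_right]
    exact dist_convolution_le ((norm_nonneg _).trans (hC 0)) (φ n).support_normed_eq.subset
      (φ n).nonneg_normed (φ n).integral_normed (hcont hk).aestronglyMeasurable
      fun y _ ↦ (dist_zero_right _).trans_le (hC y)
  · simp only [hderiv hk]
    exact ContDiffBump.convolution_tendsto_right_of_continuous hφ (hcont hk) x

theorem exists_bound_iteratedFDeriv_contDiffBump_comp_smul (χ : ContDiffBump (0 : E)) (k : ℕ) :
    ∃ C, ∀ a ∈ Icc (0 : ℝ) 1, ∀ x, ‖iteratedFDeriv ℝ k (fun y ↦ χ (a • y)) x‖ ≤ C := by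
  obtain ⟨C, hC⟩ := (χ.hasCompactSupport.iteratedFDeriv k).exists_bound_of_continuous
    χ.contDiff.continuous_iteratedFDeriv'
  refine ⟨C, fun a ha x ↦ ?_⟩
  rw [iteratedFDeriv_comp_const_smul a χ.contDiff, norm_smul, norm_pow,
    Real.norm_of_nonneg ha.1]
  exact (mul_le_of_le_one_left (norm_nonneg _) (pow_le_one₀ ha.1 ha.2)).trans (hC _)

theorem tendstoBoundedly_cutoff_smul (χ : ContDiffBump (0 : E)) (hf : ContDiff ℝ m f)
    (hfb : ∀ k ≤ m, ∃ C, ∀ x, ‖iteratedFDeriv ℝ k f x‖ ≤ C) :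
    TendstoBoundedly m (fun n x ↦ χ ((n + 1 : ℝ)⁻¹ • x) • f x) f := by
  have hχ (n : ℕ) : ContDiff ℝ m fun x ↦ χ ((n + 1 : ℝ)⁻¹ • x) :=
    χ.contDiff.comp (contDiff_const_smul _)
  have heq (x : E) : ∀ᶠ n : ℕ in atTop, (fun y ↦ χ ((n + 1 : ℝ)⁻¹ • y) • f y) =ᶠ[𝓝 x] f := by
    have hscale : Tendsto (fun n : ℕ ↦ (n + 1 : ℝ)⁻¹) atTop (𝓝 0) := by
      simpa only [one_div] using tendsto_one_div_add_atTop_nhds_zero_nat (𝕜 := ℝ)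
    have hnhds : ∀ᶠ a in 𝓝 (0 : ℝ), ∀ᶠ y in 𝓝 x, χ (a • y) = 1 := by
      have hsmul : Tendsto (fun p : ℝ × E ↦ p.1 • p.2) (𝓝 (0, x)) (𝓝 0) :=
        continuous_smul.tendsto' _ _ (zero_smul ℝ x)
      exact (hsmul.eventually χ.eventuallyEq_one).curry_nhds
    filter_upwards [hscale.eventually hnhds] with n hn
    filter_upwards [hn] with y hy
    rw [hy, one_smul]
  refine ⟨fun n ↦ (hχ n).smul hf, fun {k} hk ↦ ?_, fun {k} _ x ↦ ?_⟩
  · refine exists_bound_iteratedFDeriv_smul hχ hf (fun j _ ↦ ?_) hfb hk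
    obtain ⟨C, hC⟩ := exists_bound_iteratedFDeriv_contDiffBump_comp_smul χ j
    exact ⟨C, fun n ↦ hC _ ⟨by positivity, inv_le_one_of_one_le₀ (by simp)⟩⟩
  · exact tendsto_const_nhds.congr' ((heq x).mono fun n hn ↦
      ((hn.iteratedFDeriv ℝ k).eq_of_nhds).symm)

end Approximation

section ItoIdentity

variable {V : Type*} [NormedAddCommGroup V] [InnerProductSpace ℝ V] [MeasurableSpace V]
  {ι : Type*} [Fintype ι]

/-- The integrated backward equation for `f`: the increment `∫ f dμ_r - f 0` is the time integral
over `(r, t]` of the integrals of `∑ k, c s k ∂_{v k} ∂_{w k} f` against `μ s`. -/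
def ItoIdentity (c : ℝ → ι → ℝ) (v w : ι → V) (r t : ℝ) (μ : ℝ → Measure V) (f : V → ℂ) : Prop :=
  ∫ y, f y ∂(μ r) = f 0 + ∫ s in Ioc r t, ∑ k, c s k •
    ∫ y, iteratedFDeriv ℝ 2 f y ![v k, w k] ∂(μ s)

variable [FiniteDimensional ℝ V] [BorelSpace V] {c : ℝ → ι → ℝ} {v w : ι → V} {r t : ℝ}
  {μ : ℝ → Measure V} {f : V → ℂ}

namespace IsBackwardGaussian

theorem tendsto_integral_sum_smul (hμ : IsBackwardGaussian c v w r t μ) {H : ℕ → V → ℂ}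
    (hH : TendstoBoundedly 2 H f) :
    Tendsto (fun n ↦ ∫ s in Ioc r t, ∑ k, c s k •
      ∫ y, iteratedFDeriv ℝ 2 (H n) y ![v k, w k] ∂(μ s)) atTop (𝓝 (∫ s in Ioc r t, ∑ k, c s k •
      ∫ y, iteratedFDeriv ℝ 2 f y ![v k, w k] ∂(μ s))) := by
  have hprob {s : ℝ} (hs : s ∈ Ioc r t) : IsProbabilityMeasure (μ s) :=
    hμ.isProbabilityMeasure (Ioc_subset_Icc_self hs)
  choose C hC using fun k ↦ hH.exists_bound_apply le_rfl ![v k, w k]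
  refine tendsto_integral_of_dominated_convergence (fun s ↦ ∑ k, ‖c s k‖ * C k)
    (fun n ↦ ?_) ?_ (fun n ↦ ?_) ?_
  · refine Finset.aestronglyMeasurable_fun_sum _ fun k _ ↦
      (hμ.integrableOn_coeff k).aestronglyMeasurable.smul ?_
    exact ((hμ.continuousOn_integral (hH.continuous_iteratedFDeriv_apply le_rfl n _)
      (hC k n)).mono Ioc_subset_Icc_self).aestronglyMeasurable measurableSet_Ioc
  · exact integrable_finsetSum _ fun k _ ↦ (hμ.integrableOn_coeff k).norm.mul_const _
  · filter_upwards [ae_restrict_mem measurableSet_Ioc] with s hs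
    have := hprob hs
    refine (norm_sum_le _ _).trans (Finset.sum_le_sum fun k _ ↦ ?_)
    rw [norm_smul]
    gcongr
    simpa only [probReal_univ, mul_one] using
      norm_integral_le_of_norm_le_const (μ := μ s) (.of_forall (hC k n))
  · filter_upwards [ae_restrict_mem measurableSet_Ioc] with s hs
    have := hprob hs
    exact tendsto_finsetSum _ fun k _ ↦
      (hH.tendsto_integral le_rfl ![v k, w k] (μ s)).const_smul (c s k)

theorem itoIdentity_of_tendstoBoundedly (hμ : IsBackwardGaussian c v w r t μ) {H : ℕ → V → ℂ}
    (hH : TendstoBoundedly 2 H f) (hIto : ∀ n, ItoIdentity c v w r t μ (H n)) :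
    ItoIdentity c v w r t μ f := by
  have := hμ.isProbabilityMeasure (left_mem_Icc.2 hμ.le)
  have hleft : Tendsto (fun n ↦ ∫ y, H n y ∂(μ r)) atTop (𝓝 (∫ y, f y ∂(μ r))) :=
    hH.tendsto_integral zero_le_two ![] (μ r)
  have hzero : Tendsto (fun n ↦ H n 0) atTop (𝓝 (f 0)) := hH.tendsto_apply zero_le_two ![] 0
  exact tendsto_nhds_unique hleft
    ((hzero.add (hμ.tendsto_integral_sum_smul hH)).congr fun n ↦ (hIto n).symm)

theorem itoIdentity_of_contDiff_infty (hμ : IsBackwardGaussian c v w r t μ)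
    (hf : ContDiff ℝ ∞ f) (hs : HasCompactSupport f) : ItoIdentity c v w r t μ f := by
  have hderiv (k : ι) (y : V) :
      (∂_{v k} (∂_{w k} (hs.toSchwartzMap hf))) y = iteratedFDeriv ℝ 2 f y ![v k, w k] :=
    SchwartzMap.iteratedLineDerivOp_eq_iteratedFDeriv (m := ![v k, w k]) (f := hs.toSchwartzMap hf)
  have hIto := hμ.integral_schwartzMap (hs.toSchwartzMap hf)
  simp only [hderiv] at hIto
  exact hIto

theorem itoIdentity_of_hasCompactSupport (hμ : IsBackwardGaussian c v w r t μ)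
    (hf : ContDiff ℝ 2 f) (hs : HasCompactSupport f) : ItoIdentity c v w r t μ f := by
  let φ (n : ℕ) : ContDiffBump (0 : V) :=
    { rIn := 1 / (n + 2)
      rOut := 1 / (n + 1)
      rIn_pos := by positivity
      rIn_lt_rOut := by gcongr; norm_num }
  have hφ : Tendsto (fun n ↦ (φ n).rOut) atTop (𝓝 0) := tendsto_one_div_add_atTop_nhds_zero_nat
  refine hμ.itoIdentity_of_tendstoBoundedly
    (tendstoBoundedly_normed_convolution (μ := volume) hφ hf hs) fun n ↦
    hμ.itoIdentity_of_contDiff_infty ?_ ?_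
  · exact (φ n).hasCompactSupport_normed.contDiff_convolution_left _ (φ n).contDiff_normed
      hf.continuous.locallyIntegrable
  · exact (φ n).hasCompactSupport_normed.convolution _ hs

theorem itoIdentity (hμ : IsBackwardGaussian c v w r t μ) (hf : ContDiff ℝ 2 f)
    (hfb : ∀ k ≤ 2, ∃ C, ∀ x, ‖iteratedFDeriv ℝ k f x‖ ≤ C) : ItoIdentity c v w r t μ f := by
  let χ : ContDiffBump (0 : V) := default
  have hcutoff := tendstoBoundedly_cutoff_smul χ hf hfb
  refine hμ.itoIdentity_of_tendstoBoundedly hcutoff fun n ↦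
    hμ.itoIdentity_of_hasCompactSupport (hcutoff.contDiff n) ?_
  exact (χ.hasCompactSupport.comp_homeomorph
    (Homeomorph.smulOfNeZero _ (by positivity : (n + 1 : ℝ)⁻¹ ≠ 0))).smul_right

end IsBackwardGaussian

end ItoIdentity

section AffineComposition

variable {E F : Type*} [NormedAddCommGroup E] [NormedSpace ℝ E] [NormedAddCommGroup F]
  [NormedSpace ℝ F] (L : E →L[ℝ] F) {n : WithTop ℕ∞} {h : F → ℝ} {k : ℕ}

theorem iteratedFDeriv_ofReal_comp_add (hh : ContDiff ℝ n h) (hk : k ≤ n) (x : F) (y : E) :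
    iteratedFDeriv ℝ k (fun y ↦ (h (x + L y) : ℂ)) y =
      Complex.ofRealCLM.compContinuousMultilinearMap
        ((iteratedFDeriv ℝ k h (x + L y)).compContinuousLinearMap fun _ ↦ L) := by
  have htrans : ContDiff ℝ n fun z ↦ h (x + z) := hh.comp (contDiff_const.add contDiff_id)
  rw [← iteratedFDeriv_comp_add_left, ← L.iteratedFDeriv_comp_right htrans y hk]
  exact Complex.ofRealCLM.iteratedFDeriv_comp_left (htrans.comp L.contDiff).contDiffAt hk

theorem exists_bound_iteratedFDeriv_ofReal_comp_add (hh : ContDiff ℝ n h) (hk : k ≤ n)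
    (hb : ∃ C, ∀ x, ‖iteratedFDeriv ℝ k h x‖ ≤ C) (x : F) :
    ∃ C, ∀ y, ‖iteratedFDeriv ℝ k (fun y ↦ (h (x + L y) : ℂ)) y‖ ≤ C := by
  obtain ⟨C, hC⟩ := hb
  refine ⟨‖Complex.ofRealCLM‖ * (C * ∏ _ : Fin k, ‖L‖), fun y ↦ ?_⟩
  rw [iteratedFDeriv_ofReal_comp_add L hh hk]
  refine (ContinuousLinearMap.norm_compContinuousMultilinearMap_le _ _).trans ?_
  gcongr
  refine (ContinuousMultilinearMap.norm_compContinuousLinearMap_le _ _).trans ?_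
  gcongr
  exact hC _

end AffineComposition

section Coordinates

variable {d : ℕ}

theorem pd_pd_eq_iteratedFDeriv {h : (Fin d → ℝ) → ℝ} (hh : ContDiff ℝ 2 h) (i j : Fin d)
    (x : Fin d → ℝ) :
    pd i (pd j h) x = iteratedFDeriv ℝ 2 h x ![Pi.single i 1, Pi.single j 1] := by
  have hdiff : DifferentiableAt ℝ (fderiv ℝ h) x :=
    (hh.fderiv_right (m := 1) (by norm_num)).differentiable one_ne_zero x
  have hpd : pd j h = fun y ↦ fderiv ℝ h y (Pi.single j 1) := rfl
  rw [iteratedFDeriv_two_apply, pd, hpd, fderiv_clm_apply hdiff (differentiableAt_const _)]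
  simp

theorem quadSymbol_single (c : Fin d → Fin d → ℝ) (ξ : EuclideanSpace ℝ (Fin d)) :
    quadSymbol (fun k : Fin d × Fin d ↦ c k.1 k.2) (fun k ↦ EuclideanSpace.single k.1 1)
      (fun k ↦ EuclideanSpace.single k.2 1) ξ = ∑ i, ∑ j, c i j * ξ i * ξ j := by
  simp only [quadSymbol, EuclideanSpace.inner_single_left, map_one, one_mul, Fintype.sum_prod_type,
    mul_assoc]

theorem integrableOn_of_integrableOn_aMax {a : ℝ → Fin d → Fin d → ℝ} {S : Set ℝ}
    (ha_meas : ∀ i j, Measurable fun t ↦ a t i j) (ha : IntegrableOn (aMax a) S) (i j : Fin d) :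
    IntegrableOn (fun t ↦ a t i j) S :=
  Integrable.mono' ha (ha_meas i j).aestronglyMeasurable <| .of_forall fun t ↦
    le_ciSup_of_le (finite_range fun i ↦ ⨆ j, |a t i j|).bddAbove i
      (le_ciSup (finite_range fun j ↦ |a t i j|).bddAbove j)

variable {T : ℝ} {a : ℝ → Fin d → Fin d → ℝ} {ν : ℝ → ℝ → Measure (Fin d → ℝ)}

theorem IsGaussianFamily.charFun_map_toLp (hν : IsGaussianFamily T a ν)
    (ha : ∀ i j, IntegrableOn (fun t ↦ a t i j) (Ioc 0 T)) {s t : ℝ} (hs : 0 ≤ s) (hst : s ≤ t)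
    (ht : t ≤ T) (ξ : EuclideanSpace ℝ (Fin d)) :
    charFun ((ν s t).map (MeasurableEquiv.toLp 2 _)) ξ =
      Real.exp (-∫ u in s..t, ∑ i, ∑ j, a u i j * ξ i * ξ j) := by
  have hint (i j : Fin d) : IntegrableOn (fun u ↦ a u i j * ξ i * ξ j) (Ioc s t) :=
    (((ha i j).mono_set (Ioc_subset_Ioc hs ht)).mul_const _).mul_const _
  have hquad : ∫ u in Ioc s t, ∑ i, ∑ j, a u i j * ξ i * ξ j =
      (∑ i, ∑ j, (∫ u in Ioc s t, 2 * a u i j) * ξ i * ξ j) / 2 := by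
    rw [integral_finsetSum _ fun i _ ↦ integrable_finsetSum _ fun j _ ↦ hint i j]
    simp only [fun i ↦ integral_finsetSum Finset.univ fun j _ ↦ hint i j, integral_mul_const,
      integral_const_mul, Finset.sum_div]
    exact Finset.sum_congr rfl fun i _ ↦ Finset.sum_congr rfl fun j _ ↦ by ring
  have hinner (y : Fin d → ℝ) : ⟪MeasurableEquiv.toLp 2 _ y, ξ⟫ = ∑ k, ξ k * y k :=
    PiLp.inner_apply _ _
  rw [charFun_apply, integral_map_equiv, intervalIntegral.integral_of_le hst, hquad]
  simp only [hinner, mul_comm _ Complex.I]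
  rw [(hν s t hs hst ht).2, ← neg_div]
  push_cast
  rfl

theorem IsGaussianFamily.isBackwardGaussian (hν : IsGaussianFamily T a ν)
    (ha : ∀ i j, IntegrableOn (fun t ↦ a t i j) (Ioc 0 T)) {r t : ℝ} (hr : 0 ≤ r) (hrt : r ≤ t)
    (ht : t ≤ T) :
    IsBackwardGaussian (fun s (k : Fin d × Fin d) ↦ a s k.1 k.2)
      (fun k ↦ EuclideanSpace.single k.1 1) (fun k ↦ EuclideanSpace.single k.2 1) r t
      fun s ↦ (ν s t).map (MeasurableEquiv.toLp 2 _) where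
  le := hrt
  integrableOn_coeff k := (ha k.1 k.2).mono_set (Ioc_subset_Ioc hr ht)
  isProbabilityMeasure {s} hs := by
    have := (hν s t (hr.trans hs.1) hs.2 ht).1
    exact Measure.isProbabilityMeasure_map (MeasurableEquiv.measurable _).aemeasurable
  charFun_eq {s} hs ξ := by
    simp only [quadSymbol_single]
    exact hν.charFun_map_toLp ha (hr.trans hs.1) hs.2 ht ξ

theorem iteratedFDeriv_ofReal_comp_add_single {h : (Fin d → ℝ) → ℝ} (hh : ContDiff ℝ 2 h)
    (x : Fin d → ℝ) (i j : Fin d) (y : EuclideanSpace ℝ (Fin d)) :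
    iteratedFDeriv ℝ 2 (fun y : EuclideanSpace ℝ (Fin d) ↦ (h (x + y.ofLp) : ℂ)) y
      ![EuclideanSpace.single i 1, EuclideanSpace.single j 1] = pd i (pd j h) (x + y.ofLp) := by
  let L : EuclideanSpace ℝ (Fin d) →L[ℝ] (Fin d → ℝ) := EuclideanSpace.equiv (Fin d) ℝ
  have hsingle : (fun k ↦ L (![EuclideanSpace.single i 1, EuclideanSpace.single j 1] k)) =
      ![Pi.single i 1, Pi.single j 1] := funext <| Fin.forall_fin_two.2 ⟨rfl, rfl⟩
  rw [pd_pd_eq_iteratedFDeriv hh, ← hsingle]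
  exact DFunLike.congr_fun (iteratedFDeriv_ofReal_comp_add L hh (k := 2) le_rfl x y) _

end Coordinates

theorem gaussian_ito_identity_general {T : ℝ} {d : ℕ} {a : ℝ → Fin d → Fin d → ℝ}
    (ha : ∀ i j, IntegrableOn (fun t ↦ a t i j) (Ioc 0 T))
    {ν : ℝ → ℝ → Measure (Fin d → ℝ)} (hν : IsGaussianFamily T a ν) {h : (Fin d → ℝ) → ℝ}
    (hh : ContDiff ℝ 2 h) (hh_bdd : ∀ n : ℕ, n ≤ 2 → ∃ C : ℝ, ∀ x, ‖iteratedFDeriv ℝ n h x‖ ≤ C)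
    {r t : ℝ} (hr : 0 ≤ r) (hrt : r ≤ t) (ht : t ≤ T) (x : Fin d → ℝ) :
    ∫ y, h (x + y) ∂(ν r t) =
      h x + ∫ s in Ioc r t, ∑ i, ∑ j, a s i j * ∫ y, pd i (pd j h) (x + y) ∂(ν s t) := by
  let L : EuclideanSpace ℝ (Fin d) →L[ℝ] (Fin d → ℝ) := EuclideanSpace.equiv (Fin d) ℝ
  have hf : ContDiff ℝ 2 fun y : EuclideanSpace ℝ (Fin d) ↦ (h (x + y.ofLp) : ℂ) :=
    Complex.ofRealCLM.contDiff.comp (hh.comp (contDiff_const.add L.contDiff))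
  have hIto := (hν.isBackwardGaussian ha hr hrt ht).itoIdentity hf fun k hk ↦
    exists_bound_iteratedFDeriv_ofReal_comp_add L hh (by exact_mod_cast hk) (hh_bdd k hk) x
  simp only [ItoIdentity, integral_map_equiv, iteratedFDeriv_ofReal_comp_add_single hh,
    WithLp.ofLp_zero, add_zero, integral_complex_ofReal, Complex.real_smul,
    ← Complex.ofReal_mul, ← Complex.ofReal_sum, ← Complex.ofReal_add, Fintype.sum_prod_type] at hIto
  exact Complex.ofReal_injective hIto

/-- Itô-type identity: for `h ∈ C_b^2(ℝ^d)` and `0 ≤ r ≤ t ≤ T`,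
`∫ h(x+y) dν_{r,t}(y) = h(x) + ∫_r^t Σ_{i,j} a^{ij}(s) ∫ ∂_i∂_j h(x+y) dν_{s,t}(y) ds`. -/
theorem gaussian_ito_identity (T : ℝ) (hT : 0 < T)
    (d : ℕ) (hd : 0 < d)
    (a : ℝ → Fin d → Fin d → ℝ)
    (ha_meas : ∀ i j, Measurable fun t => a t i j)
    (ha_symm : ∀ t ∈ Ioc (0:ℝ) T, ∀ i j, a t i j = a t j i)
    (ha_pos : ∀ t ∈ Ioc (0:ℝ) T, ∀ ξ : Fin d → ℝ,
      0 ≤ ∑ i, ∑ j, a t i j * ξ i * ξ j)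
    (ha_int : IntegrableOn (aMax a) (Ioc (0:ℝ) T))
    (ν : ℝ → ℝ → Measure (Fin d → ℝ))
    (hν : IsGaussianFamily T a ν)
    (h : (Fin d → ℝ) → ℝ)
    (hh : ContDiff ℝ 2 h)
    (hh_bdd : ∀ n : ℕ, n ≤ 2 → ∃ C : ℝ, ∀ x, ‖iteratedFDeriv ℝ n h x‖ ≤ C) :
    ∀ r t : ℝ, 0 ≤ r → r ≤ t → t ≤ T → ∀ x : Fin d → ℝ,
      (∫ y, h (x + y) ∂(ν r t)) =
        h x + ∫ s in Ioc r t,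
          ∑ i, ∑ j, a s i j * ∫ y, pd i (pd j h) (x + y) ∂(ν s t) := by
  intro r t hr hrt ht
  exact gaussian_ito_identity_general (integrableOn_of_integrableOn_aMax ha_meas ha_int) hν hh
    hh_bdd hr hrt ht

end
end

section
/- Let p ∈ [2,∞), let A = (A^{ij}) be a real symmetric positive semidefinite d×d matrix, and let u ∈ C_c^∞(ℝ^d; ℝ). Then ∫_{ℝ^d} |u(x)|^{p-2} u(x) Σ_{i,j} A^{ij} ∂_{x^i}∂_{x^j} u(x) dx = −(p−1) ∫_{ℝ^d} |u(x)|^{p-2} Σ_{i,j} A^{ij} ∂_{x^i} u(x) ∂_{x^j} u(x) dx, and in particular this quantity is ≤ 0. -/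
/-!
For `p ≥ 2` the function `φ t = |t| ^ (p - 2) * t` is `C¹`, also at `0`, with derivative
`(p - 1) * |t| ^ (p - 2)`. Integrate the divergence of the vector field `A ∇u` by parts against
`φ ∘ u`, whose gradient is `φ' (u) ∇u`. The integrand on the right is then `φ' (u) ≥ 0` times the
quadratic form of `A` at `∇u`, which gives the sign.
-/

open MeasureTheory Set

noncomputable section

section AbsRpowMulSelf

variable {q : ℝ}

lemma continuous_abs_rpow (hq : 0 ≤ q) : Continuous fun t : ℝ => |t| ^ q :=
  continuous_abs.rpow_const fun _ => Or.inr hq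

lemma hasDerivAt_abs_rpow_mul_self_of_ne_zero (q : ℝ) {t : ℝ} (ht : t ≠ 0) :
    HasDerivAt (fun s : ℝ => |s| ^ q * s) ((q + 1) * |t| ^ q) t := by
  have habs : |t| ≠ 0 := abs_ne_zero.mpr ht
  refine (((hasDerivAt_abs ht).rpow_const (Or.inl habs)).mul (hasDerivAt_id t)).congr_deriv ?_
  calc (SignType.sign t : ℝ) * q * |t| ^ (q - 1) * id t + |t| ^ q * 1
      = q * (|t| ^ (q - 1) * (SignType.sign t * t)) + |t| ^ q := by rw [id]; ring
    _ = q * |t| ^ q + |t| ^ q := by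
      rw [sign_mul_self, ← Real.rpow_add_one habs, sub_add_cancel]
    _ = (q + 1) * |t| ^ q := by ring

lemma hasDerivAt_abs_rpow_mul_self (hq : 0 ≤ q) (t : ℝ) :
    HasDerivAt (fun s : ℝ => |s| ^ q * s) ((q + 1) * |t| ^ q) t :=
  hasDerivAt_of_hasDerivAt_of_ne' (g := fun s => (q + 1) * |s| ^ q)
    (fun _ hs => hasDerivAt_abs_rpow_mul_self_of_ne_zero q hs)
    ((continuous_abs_rpow hq).mul continuous_id).continuousAt
    ((continuous_abs_rpow hq).const_mul _).continuousAt t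

lemma contDiff_abs_rpow_mul_self (hq : 0 ≤ q) : ContDiff ℝ 1 fun t : ℝ => |t| ^ q * t := by
  have hderiv : deriv (fun t : ℝ => |t| ^ q * t) = fun t => (q + 1) * |t| ^ q :=
    deriv_eq (hasDerivAt_abs_rpow_mul_self hq)
  rw [contDiff_one_iff_deriv, hderiv]
  exact ⟨fun t => (hasDerivAt_abs_rpow_mul_self hq t).differentiableAt,
    (continuous_abs_rpow hq).const_mul _⟩

end AbsRpowMulSelf

section IntegrationByParts

variable {E : Type*} [NormedAddCommGroup E] [NormedSpace ℝ E]

section Derivatives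

variable {F : Type*} [NormedAddCommGroup F] [NormedSpace ℝ F] {u : E → F}

lemma continuous_fderiv_apply_const (hu : ContDiff ℝ 1 u) (v : E) :
    Continuous fun x => fderiv ℝ u x v :=
  (hu.continuous_fderiv one_ne_zero).clm_apply continuous_const

lemma contDiff_one_fderiv_apply_const (hu : ContDiff ℝ 2 u) (v : E) :
    ContDiff ℝ 1 fun x => fderiv ℝ u x v :=
  (hu.fderiv_right one_add_one_eq_two.le).clm_apply contDiff_const

lemma fderiv_fderiv_apply_const {x : E} (hu : DifferentiableAt ℝ (fderiv ℝ u) x) (v w : E) :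
    fderiv ℝ (fun y => fderiv ℝ u y v) x w = fderiv ℝ (fderiv ℝ u) x w v := by
  simp [fderiv_clm_apply hu (differentiableAt_const v)]

lemma fderiv_fderiv_apply_sum_smul {x : E} (hu : DifferentiableAt ℝ (fderiv ℝ u) x)
    {ι : Type*} (s : Finset ι) (a : ι → ℝ) (v : ι → E) (w : E) :
    fderiv ℝ (fun y => fderiv ℝ u y (∑ j ∈ s, a j • v j)) x w =
      ∑ j ∈ s, a j • fderiv ℝ (fun y => fderiv ℝ u y (v j)) x w := by
  rw [fderiv_fderiv_apply_const hu]
  simp only [fderiv_fderiv_apply_const hu, map_sum, map_smul]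

end Derivatives

variable [MeasurableSpace E] [BorelSpace E] {μ : Measure E}

section NormedField

variable {𝕜 : Type*} [NormedField 𝕜] [NormedAlgebra ℝ 𝕜] {f g : E → 𝕜}

lemma integrable_mul_fderiv_of_hasCompactSupport [IsFiniteMeasureOnCompacts μ]
    (hf : Continuous f) (hg : ContDiff ℝ 1 g) (hgc : HasCompactSupport g) (v : E) :
    Integrable (fun x => f x * fderiv ℝ g x v) μ :=
  (hf.mul (continuous_fderiv_apply_const hg v)).integrable_of_hasCompactSupport
    (hgc.fderiv_apply ℝ v).mul_left

lemma integrable_fderiv_mul_of_hasCompactSupport [IsFiniteMeasureOnCompacts μ]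
    (hf : ContDiff ℝ 1 f) (hg : Continuous g) (hgc : HasCompactSupport g) (v : E) :
    Integrable (fun x => fderiv ℝ f x v * g x) μ :=
  ((continuous_fderiv_apply_const hf v).mul hg).integrable_of_hasCompactSupport hgc.mul_left

variable [FiniteDimensional ℝ E] [μ.IsAddHaarMeasure]

lemma integral_mul_fderiv_eq_neg_fderiv_mul_of_hasCompactSupport
    (hf : ContDiff ℝ 1 f) (hg : ContDiff ℝ 1 g) (hgc : HasCompactSupport g) (v : E) :
    ∫ x, f x * fderiv ℝ g x v ∂μ = -∫ x, fderiv ℝ f x v * g x ∂μ :=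
  integral_mul_fderiv_eq_neg_fderiv_mul_of_integrable
    (integrable_fderiv_mul_of_hasCompactSupport hf hg.continuous hgc v)
    (integrable_mul_fderiv_of_hasCompactSupport hf.continuous hg hgc v)
    ((hf.continuous.mul hg.continuous).integrable_of_hasCompactSupport hgc.mul_left)
    (fun x _ => hf.differentiable one_ne_zero x) (fun x _ => hg.differentiable one_ne_zero x)

lemma integral_mul_sum_fderiv_eq_neg_integral_sum_fderiv_mul {ι : Type*} [Fintype ι] (v : ι → E)
    {G : ι → E → 𝕜} (hf : ContDiff ℝ 1 f) (hG : ∀ i, ContDiff ℝ 1 (G i))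
    (hGc : ∀ i, HasCompactSupport (G i)) :
    ∫ x, f x * ∑ i, fderiv ℝ (G i) x (v i) ∂μ = -∫ x, ∑ i, fderiv ℝ f x (v i) * G i x ∂μ := by
  simp only [Finset.mul_sum]
  rw [integral_finsetSum _ fun i _ =>
      integrable_mul_fderiv_of_hasCompactSupport hf.continuous (hG i) (hGc i) (v i),
    integral_finsetSum _ fun i _ =>
      integrable_fderiv_mul_of_hasCompactSupport hf (hG i).continuous (hGc i) (v i),
    ← Finset.sum_neg_distrib]
  exact Finset.sum_congr rfl fun i _ =>
    integral_mul_fderiv_eq_neg_fderiv_mul_of_hasCompactSupport hf (hG i) (hGc i) (v i)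

end NormedField

variable [FiniteDimensional ℝ E] [μ.IsAddHaarMeasure] {ι : Type*} [Fintype ι]
  {u : E → ℝ}

lemma integral_mul_sum_fderiv_fderiv_eq_neg_integral_sum_fderiv_mul_fderiv
    {f : E → ℝ} (A : ι → ι → ℝ) (v : ι → E) (hf : ContDiff ℝ 1 f) (hu : ContDiff ℝ 2 u)
    (huc : HasCompactSupport u) :
    ∫ x, f x * ∑ i, ∑ j, A i j * fderiv ℝ (fun y => fderiv ℝ u y (v j)) x (v i) ∂μ =
      -∫ x, ∑ i, ∑ j, A i j * fderiv ℝ f x (v i) * fderiv ℝ u x (v j) ∂μ := by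
  have hdiff : Differentiable ℝ (fderiv ℝ u) :=
    (hu.fderiv_right one_add_one_eq_two.le).differentiable one_ne_zero
  -- `∑ j, A i j * ∂_{v j} u` is the derivative of `u` in the single direction `∑ j, A i j • v j`.
  have hdiv := integral_mul_sum_fderiv_eq_neg_integral_sum_fderiv_mul (μ := μ) v hf
    (fun i => contDiff_one_fderiv_apply_const hu (∑ j, A i j • v j))
    (fun i => huc.fderiv_apply ℝ (∑ j, A i j • v j))
  simp only [fderiv_fderiv_apply_sum_smul (hdiff _)] at hdiv
  simpa only [map_sum, map_smul, smul_eq_mul, Finset.mul_sum, mul_assoc, mul_left_comm] using hdiv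

lemma integral_comp_mul_sum_fderiv_fderiv_eq_neg {φ : ℝ → ℝ} (hφ : ContDiff ℝ 1 φ)
    (A : ι → ι → ℝ) (v : ι → E) (hu : ContDiff ℝ 2 u) (huc : HasCompactSupport u) :
    ∫ x, φ (u x) * ∑ i, ∑ j, A i j * fderiv ℝ (fun y => fderiv ℝ u y (v j)) x (v i) ∂μ =
      -∫ x, deriv φ (u x) *
        ∑ i, ∑ j, A i j * fderiv ℝ u x (v i) * fderiv ℝ u x (v j) ∂μ := by
  have hu1 : ContDiff ℝ 1 u := hu.of_le one_le_two
  have hchain (x w : E) : fderiv ℝ (fun y => φ (u y)) x w = deriv φ (u x) * fderiv ℝ u x w := by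
    have hcomp := (hφ.differentiable one_ne_zero (u x)).hasDerivAt.comp_hasFDerivAt x
      (hu1.differentiable one_ne_zero x).hasFDerivAt
    exact congrArg (· w) hcomp.fderiv
  rw [integral_mul_sum_fderiv_fderiv_eq_neg_integral_sum_fderiv_mul_fderiv
    (f := fun x => φ (u x)) A v (hφ.comp hu1) hu huc]
  simp only [hchain, Finset.mul_sum, mul_assoc, mul_left_comm]

theorem integration_by_parts_general {p : ℝ} (hp : 2 ≤ p) {A : ι → ι → ℝ}
    (hA : ∀ ξ : ι → ℝ, 0 ≤ ∑ i, ∑ j, A i j * ξ i * ξ j) (v : ι → E)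
    (hu : ContDiff ℝ 2 u) (huc : HasCompactSupport u) :
    ∫ x, |u x| ^ (p - 2) * u x *
        ∑ i, ∑ j, A i j * fderiv ℝ (fun y => fderiv ℝ u y (v j)) x (v i) ∂μ =
      -(p - 1) * ∫ x, |u x| ^ (p - 2) *
        ∑ i, ∑ j, A i j * fderiv ℝ u x (v i) * fderiv ℝ u x (v j) ∂μ ∧
    ∫ x, |u x| ^ (p - 2) * u x *
      ∑ i, ∑ j, A i j * fderiv ℝ (fun y => fderiv ℝ u y (v j)) x (v i) ∂μ ≤ 0 := by
  have hq : 0 ≤ p - 2 := sub_nonneg.mpr hp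
  have hderiv (t : ℝ) : deriv (fun s : ℝ => |s| ^ (p - 2) * s) t = (p - 1) * |t| ^ (p - 2) := by
    rw [(hasDerivAt_abs_rpow_mul_self hq t).deriv]
    ring
  have hident := integral_comp_mul_sum_fderiv_fderiv_eq_neg (μ := μ) (contDiff_abs_rpow_mul_self hq)
    A v hu huc
  simp only [hderiv, mul_assoc (p - 1), integral_const_mul, ← neg_mul] at hident
  have henergy : 0 ≤ ∫ x, |u x| ^ (p - 2) *
      ∑ i, ∑ j, A i j * fderiv ℝ u x (v i) * fderiv ℝ u x (v j) ∂μ :=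
    integral_nonneg fun x => mul_nonneg (Real.rpow_nonneg (abs_nonneg _) _)
      (hA fun i => fderiv ℝ u x (v i))
  exact ⟨hident, hident.trans_le (mul_nonpos_of_nonpos_of_nonneg (by linarith) henergy)⟩

end IntegrationByParts

/-- Integration by parts: for `p ≥ 2`, a symmetric positive semidefinite matrix `A`, and
`u ∈ C_c^∞(ℝ^d)`,
`∫ |u|^{p-2} u Σ A^{ij} ∂_i∂_j u dx = -(p-1) ∫ |u|^{p-2} Σ A^{ij} ∂_i u ∂_j u dx ≤ 0`. -/
theorem integration_by_parts (d : ℕ) (hd : 0 < d) (p : ℝ) (hp : 2 ≤ p)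
    (A : Fin d → Fin d → ℝ)
    (hA_symm : ∀ i j, A i j = A j i)
    (hA_pos : ∀ ξ : Fin d → ℝ, 0 ≤ ∑ i, ∑ j, A i j * ξ i * ξ j)
    (u : (Fin d → ℝ) → ℝ)
    (hu_smooth : ContDiff ℝ (⊤ : ℕ∞) u)
    (hu_supp : HasCompactSupport u) :
    (∫ x, |u x| ^ (p - 2) * u x * (∑ i, ∑ j, A i j * pd i (pd j u) x)) =
      -(p - 1) * ∫ x, |u x| ^ (p - 2) * (∑ i, ∑ j, A i j * pd i u x * pd j u x) ∧
    (∫ x, |u x| ^ (p - 2) * u x * (∑ i, ∑ j, A i j * pd i (pd j u) x)) ≤ 0 := by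
  exact integration_by_parts_general hp hA_pos (fun i => Pi.single i 1)
    (mod_cast contDiff_infty.mp hu_smooth 2) hu_supp

end
end
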